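/- arXiv:2011.12876 — 2 statements merged into one kernel-verified Lean document; each statement's English description precedes it below -/
import Mathlib

section
/- For every real number k, the Hessian determinant H_k of F_k vanishes at the point (k, k, 2(k - 1)). Moreover, if k > 1, then there exists a nonzero real number c such that ∇H_k(k, k, 2(k - 1)) = c·(k - 1, k - 1, -k); that is, the asymptote x + y = k/(k - 1) of the cubic (the tangent to F_k = 0 at the inflexion point (1, -1, 0)) is tangent to the Hessian curve H_k = 0 at the point R = (k/(2(k-1)), k/(2(k-1))) of the affine chart z = 1. -/
noncomputable section

/-- The cubic form `F k (x,y,z) = -x^3 - y^3 - (z-x-y)^3 + 3k x y (z-x-y)`. -/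
def F (k x y z : ℝ) : ℝ := -x^3 - y^3 - (z - x - y)^3 + 3*k*x*y*(z - x - y)

/-- Partial derivative with respect to the first variable. -/
def pdx (f : ℝ → ℝ → ℝ → ℝ) (x y z : ℝ) : ℝ := deriv (fun t => f t y z) x

/-- Partial derivative with respect to the second variable. -/
def pdy (f : ℝ → ℝ → ℝ → ℝ) (x y z : ℝ) : ℝ := deriv (fun t => f x t z) y

/-- Partial derivative with respect to the third variable. -/
def pdz (f : ℝ → ℝ → ℝ → ℝ) (x y z : ℝ) : ℝ := deriv (fun t => f x y t) z

/-- The Hessian determinant of a function of three real variables: the determinant of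
the 3×3 matrix of its second partial derivatives. -/
def hessDet (f : ℝ → ℝ → ℝ → ℝ) (x y z : ℝ) : ℝ :=
  !![pdx (pdx f) x y z, pdy (pdx f) x y z, pdz (pdx f) x y z;
     pdx (pdy f) x y z, pdy (pdy f) x y z, pdz (pdy f) x y z;
     pdx (pdz f) x y z, pdy (pdz f) x y z, pdz (pdz f) x y z].det

/-- The gradient of a function of three real variables. -/
def grad (f : ℝ → ℝ → ℝ → ℝ) (x y z : ℝ) : ℝ × ℝ × ℝ :=
  (pdx f x y z, pdy f x y z, pdz f x y z)

/-- The dot product on `ℝ × ℝ × ℝ`. -/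
def dot (a b : ℝ × ℝ × ℝ) : ℝ := a.1 * b.1 + a.2.1 * b.2.1 + a.2.2 * b.2.2

/-!
In the coordinates `(u, v, w) = (x, y, z - x - y)` the form `F k` is the member
`-(u³ + v³ + w³) + 3k uvw` of the Hesse pencil. The Hessian determinant is covariant under linear
substitutions and maps the pencil to itself, so in these coordinates `hessDet (F k)` is again
a Hesse cubic, namely `54k² (u³ + v³ + w³) + 54 (k³ - 4) uvw`. The point in question becomes
`(k, k, -2)`, where that cubic vanishes and has gradient `54k (k³ + 8) (1, 1, k)`; the chain rule
takes this covector back to `54k (k³ + 8) (1 - k, 1 - k, k)`.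
-/

open scoped Matrix

/-- The function of a vector in `ℝ³` corresponding to a function of three real variables. -/
def ofCoords (f : ℝ → ℝ → ℝ → ℝ) (v : Fin 3 → ℝ) : ℝ := f (v 0) (v 1) (v 2)

section LinearSubstitution

variable {ι κ : Type*} [DecidableEq ι]

/-- The partial derivative of `g` in the `i`-th coordinate. -/
def partialDeriv (i : ι) (g : (ι → ℝ) → ℝ) (v : ι → ℝ) : ℝ := lineDeriv ℝ g v (Pi.single i 1)

/-- The Hessian matrix of `g`, with entry `∂ⱼ (∂ᵢ g)` in row `i` and column `j`. -/
def hessian (g : (ι → ℝ) → ℝ) (v : ι → ℝ) : Matrix ι ι ℝ :=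
  Matrix.of fun i j => partialDeriv j (partialDeriv i g) v

theorem partialDeriv_eq_fderiv [Finite ι] {g : (ι → ℝ) → ℝ} (hg : Differentiable ℝ g) (i : ι) :
    partialDeriv i g = fun v => fderiv ℝ g v (Pi.single i 1) :=
  have := Fintype.ofFinite ι
  funext fun v => (hg v).lineDeriv_eq_fderiv

theorem differentiable_partialDeriv [Fintype ι] {g : (ι → ℝ) → ℝ} (hg : ContDiff ℝ 2 g) (i : ι) :
    Differentiable ℝ (partialDeriv i g) := by
  rw [partialDeriv_eq_fderiv (hg.differentiable two_ne_zero)]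
  exact ((hg.fderiv_right (m := 1) le_rfl).clm_apply contDiff_const).differentiable one_ne_zero

theorem partialDeriv_sum_const_mul [Finite ι] [Fintype κ] {g : κ → (ι → ℝ) → ℝ}
    (hg : ∀ j, Differentiable ℝ (g j)) (c : κ → ℝ) (i : ι) (v : ι → ℝ) :
    partialDeriv i (fun w => ∑ j, c j * g j w) v = ∑ j, c j * partialDeriv i (g j) v := by
  have := Fintype.ofFinite ι
  have hsum := HasFDerivAt.fun_sum (u := Finset.univ) fun j _ =>
    ((hg j v).hasFDerivAt.const_mul (c j))
  rw [partialDeriv, (hsum.hasLineDerivAt _).lineDeriv]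
  simp [partialDeriv_eq_fderiv (hg _)]

variable [Fintype ι] [Fintype κ] [DecidableEq κ]

theorem partialDeriv_comp_mulVec {g : (κ → ℝ) → ℝ} (hg : Differentiable ℝ g)
    (A : Matrix κ ι ℝ) (i : ι) (v : ι → ℝ) :
    partialDeriv i (fun w => g (A *ᵥ w)) v = ∑ j, A j i * partialDeriv j g (A *ᵥ v) := by
  have hA : HasFDerivAt (fun w => A *ᵥ w) A.mulVecLin.toContinuousLinearMap v :=
    A.mulVecLin.toContinuousLinearMap.hasFDerivAt
  have hcomp := (hg (A *ᵥ v)).hasFDerivAt.comp v hA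
  have hcol : A *ᵥ Pi.single i 1 = ∑ j, A j i • Pi.single j (1 : ℝ) := by
    rw [Matrix.mulVec_single_one]
    exact pi_eq_sum_univ' _
  calc partialDeriv i (fun w => g (A *ᵥ w)) v
      = fderiv ℝ g (A *ᵥ v) (A *ᵥ Pi.single i 1) := (hcomp.hasLineDerivAt _).lineDeriv
    _ = ∑ j, A j i * partialDeriv j g (A *ᵥ v) := by
      simp [hcol, partialDeriv_eq_fderiv hg]

theorem hessian_comp_mulVec {g : (κ → ℝ) → ℝ} (hg : ContDiff ℝ 2 g)
    (A : Matrix κ ι ℝ) (v : ι → ℝ) :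
    hessian (fun w => g (A *ᵥ w)) v = Aᵀ * hessian g (A *ᵥ v) * A := by
  have hg' := differentiable_partialDeriv hg
  have hcomp (l : κ) : Differentiable ℝ fun w => partialDeriv l g (A *ᵥ w) :=
    (hg' l).comp A.mulVecLin.toContinuousLinearMap.differentiable
  ext i j
  have hgrad : partialDeriv i (fun w => g (A *ᵥ w))
      = fun w => ∑ l, A l i * partialDeriv l g (A *ᵥ w) :=
    funext <| partialDeriv_comp_mulVec (hg.differentiable two_ne_zero) A i
  calc partialDeriv j (partialDeriv i fun w => g (A *ᵥ w)) v
      = ∑ l, A l i * ∑ m, A m j * partialDeriv m (partialDeriv l g) (A *ᵥ v) := by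
        rw [hgrad, partialDeriv_sum_const_mul hcomp]
        simp only [partialDeriv_comp_mulVec (hg' _)]
    _ = (Aᵀ * (hessian g (A *ᵥ v) * A)) i j := by
        simp only [Matrix.mul_apply, Matrix.transpose_apply, hessian, Matrix.of_apply,
          mul_comm (A _ j)]
    _ = (Aᵀ * hessian g (A *ᵥ v) * A) i j := by rw [Matrix.mul_assoc]

theorem det_hessian_comp_mulVec {g : (ι → ℝ) → ℝ} (hg : ContDiff ℝ 2 g)
    (A : Matrix ι ι ℝ) (v : ι → ℝ) :
    (hessian (fun w => g (A *ᵥ w)) v).det = A.det ^ 2 * (hessian g (A *ᵥ v)).det := by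
  rw [hessian_comp_mulVec hg, Matrix.det_mul, Matrix.det_mul, Matrix.det_transpose]
  ring

end LinearSubstitution

section Coordinates

variable (f : ℝ → ℝ → ℝ → ℝ)

theorem ofCoords_pdx : ofCoords (pdx f) = partialDeriv 0 (ofCoords f) := by
  funext v
  simpa [ofCoords, pdx, partialDeriv, lineDeriv] using
    (deriv_comp_const_add (fun t => f t (v 1) (v 2)) (v 0) 0).symm

theorem ofCoords_pdy : ofCoords (pdy f) = partialDeriv 1 (ofCoords f) := by
  funext v
  simpa [ofCoords, pdy, partialDeriv, lineDeriv] using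
    (deriv_comp_const_add (fun t => f (v 0) t (v 2)) (v 1) 0).symm

theorem ofCoords_pdz : ofCoords (pdz f) = partialDeriv 2 (ofCoords f) := by
  funext v
  simpa [ofCoords, pdz, partialDeriv, lineDeriv] using
    (deriv_comp_const_add (fun t => f (v 0) (v 1) t) (v 2) 0).symm

theorem ofCoords_hessDet : ofCoords (hessDet f) = fun v => (hessian (ofCoords f) v).det := by
  funext v
  rw [Matrix.eta_fin_three (hessian (ofCoords f) v)]
  simp only [hessian, Matrix.of_apply, ← ofCoords_pdx, ← ofCoords_pdy, ← ofCoords_pdz]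
  rfl

theorem grad_eq_partialDeriv (x y z : ℝ) :
    grad f x y z = (partialDeriv 0 (ofCoords f) ![x, y, z],
      partialDeriv 1 (ofCoords f) ![x, y, z], partialDeriv 2 (ofCoords f) ![x, y, z]) := by
  rw [← ofCoords_pdx, ← ofCoords_pdy, ← ofCoords_pdz]
  rfl

end Coordinates

section HessePencil

/-- The member `a (u₀³ + u₁³ + u₂³) + b u₀ u₁ u₂` of the Hesse pencil of ternary cubics. -/
def hesseCubic (a b : ℝ) (u : Fin 3 → ℝ) : ℝ :=
  a * (u 0 ^ 3 + u 1 ^ 3 + u 2 ^ 3) + b * (u 0 * u 1 * u 2)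

variable (a b : ℝ)

theorem contDiff_hesseCubic {n : WithTop ℕ∞} : ContDiff ℝ n (hesseCubic a b) := by
  unfold hesseCubic
  fun_prop

-- Indices are taken modulo 3, so that `i`, `i + 1`, `i + 2` are the three coordinates.
theorem partialDeriv_hesseCubic (i : Fin 3) (u : Fin 3 → ℝ) :
    partialDeriv i (hesseCubic a b) u = 3 * a * u i ^ 2 + b * (u (i + 1) * u (i + 2)) := by
  have hcoord (j : Fin 3) := hasFDerivAt_apply (𝕜 := ℝ) j u
  have hderiv := (((((hcoord 0).pow 3).add ((hcoord 1).pow 3)).add ((hcoord 2).pow 3)).const_mul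
    a).add ((((hcoord 0).mul (hcoord 1)).mul (hcoord 2)).const_mul b)
  refine (hderiv.hasLineDerivAt (Pi.single i 1)).lineDeriv.trans ?_
  fin_cases i <;> simp <;> ring

theorem hessian_hesseCubic (u : Fin 3 → ℝ) :
    hessian (hesseCubic a b) u =
      !![6 * a * u 0, b * u 2, b * u 1;
         b * u 2, 6 * a * u 1, b * u 0;
         b * u 1, b * u 0, 6 * a * u 2] := by
  have hcoord (j : Fin 3) := hasFDerivAt_apply (𝕜 := ℝ) j u
  ext i j
  have hderiv := (((hcoord i).pow 2).const_mul (3 * a)).add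
    (((hcoord (i + 1)).mul (hcoord (i + 2))).const_mul b)
  rw [hessian, Matrix.of_apply, funext (partialDeriv_hesseCubic a b i)]
  refine (hderiv.hasLineDerivAt (Pi.single j 1)).lineDeriv.trans ?_
  fin_cases i <;> fin_cases j <;> simp <;> ring

theorem det_hessian_hesseCubic (u : Fin 3 → ℝ) :
    (hessian (hesseCubic a b) u).det =
      hesseCubic (-6 * a * b ^ 2) (216 * a ^ 3 + 2 * b ^ 3) u := by
  rw [hessian_hesseCubic, Matrix.det_fin_three]
  simp only [hesseCubic, Matrix.of_apply, Matrix.cons_val', Matrix.cons_val_zero,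
    Matrix.cons_val_fin_one, Matrix.cons_val_one, Matrix.cons_val]
  ring

end HessePencil

/-- The unimodular substitution `(x, y, z) ↦ (x, y, z - x - y)`, which takes `F k` to a member of
the Hesse pencil. -/
def hesseShear : Matrix (Fin 3) (Fin 3) ℝ :=
  !![1, 0, 0; 0, 1, 0; -1, -1, 1]

theorem hesseShear_mulVec (v : Fin 3 → ℝ) :
    hesseShear *ᵥ v = ![v 0, v 1, v 2 - v 0 - v 1] := by
  have hthird : -v 0 + -v 1 + v 2 = v 2 - v 0 - v 1 := by ring
  ext i
  fin_cases i <;> simp [hesseShear, Matrix.mulVec, dotProduct, Fin.sum_univ_three, hthird]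

theorem det_hesseShear : hesseShear.det = 1 := by
  simp [hesseShear, Matrix.det_fin_three]

theorem ofCoords_F (k : ℝ) :
    ofCoords (F k) = fun v => hesseCubic (-1) (3 * k) (hesseShear *ᵥ v) := by
  funext v
  simp only [ofCoords, F, hesseCubic, hesseShear_mulVec, Matrix.cons_val_zero,
    Matrix.cons_val_one, Matrix.cons_val]
  ring

theorem ofCoords_hessDet_F (k : ℝ) :
    ofCoords (hessDet (F k)) =
      fun v => hesseCubic (54 * k ^ 2) (54 * (k ^ 3 - 4)) (hesseShear *ᵥ v) := by
  funext v
  simp only [ofCoords_hessDet, ofCoords_F]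
  rw [det_hessian_comp_mulVec (contDiff_hesseCubic _ _), det_hesseShear, det_hessian_hesseCubic]
  ring_nf

theorem hesseShear_mulVec_tangencyPoint (k : ℝ) :
    hesseShear *ᵥ ![k, k, 2 * (k - 1)] = ![k, k, -2] := by
  have hthird : 2 * (k - 1) - k - k = -2 := by ring
  simp [hesseShear_mulVec, hthird]

theorem hessDet_F_tangencyPoint (k : ℝ) : hessDet (F k) k k (2 * (k - 1)) = 0 :=
  calc hessDet (F k) k k (2 * (k - 1))
      = hesseCubic (54 * k ^ 2) (54 * (k ^ 3 - 4)) ![k, k, -2] := by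
        rw [← hesseShear_mulVec_tangencyPoint]
        exact congrFun (ofCoords_hessDet_F k) ![k, k, 2 * (k - 1)]
    _ = 54 * k ^ 2 * (k ^ 3 + k ^ 3 + (-2) ^ 3) + 54 * (k ^ 3 - 4) * (k * k * -2) := rfl
    _ = 0 := by ring

theorem grad_hessDet_F_tangencyPoint (k : ℝ) :
    grad (hessDet (F k)) k k (2 * (k - 1)) =
      (-(54 * k * (k ^ 3 + 8)) * (k - 1), -(54 * k * (k ^ 3 + 8)) * (k - 1),
        -(54 * k * (k ^ 3 + 8)) * -k) := by
  rw [grad_eq_partialDeriv, ofCoords_hessDet_F]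
  simp only [partialDeriv_comp_mulVec ((contDiff_hesseCubic _ _).differentiable one_ne_zero),
    hesseShear_mulVec_tangencyPoint, partialDeriv_hesseCubic]
  ext <;> simp [Fin.sum_univ_three, hesseShear] <;> ring

theorem stmt_7_general (k : ℝ) :
    hessDet (F k) k k (2 * (k - 1)) = 0 ∧
    (k ≠ 0 → k ≠ -2 → ∃ c : ℝ, c ≠ 0 ∧
      grad (hessDet (F k)) k k (2 * (k - 1)) = (c * (k - 1), c * (k - 1), c * (-k))) := by
  refine ⟨hessDet_F_tangencyPoint k, fun hk₀ hk₂ => ⟨_, ?_, grad_hessDet_F_tangencyPoint k⟩⟩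
  have hcube : k ^ 3 + 8 ≠ 0 := by
    intro h
    have hpow : k ^ 3 = (-2) ^ 3 := by linarith
    exact hk₂ ((Odd.strictMono_pow (by decide : Odd 3)).injective hpow)
  exact neg_ne_zero.mpr (mul_ne_zero (mul_ne_zero (by norm_num) hk₀) hcube)

theorem stmt_7 (k : ℝ) :
    hessDet (F k) k k (2*(k - 1)) = 0 ∧
    (k > 1 → ∃ c : ℝ, c ≠ 0 ∧
      grad (hessDet (F k)) k k (2*(k - 1)) = (c*(k - 1), c*(k - 1), c*(-k))) := by
  exact ⟨(stmt_7_general k).1, fun hk => (stmt_7_general k).2 (by linarith) (by linarith)⟩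
end
end

section
/- For all real a, b, c and all (x, y, z) ∈ ℝ³, the polar quadric of the cubic F_0 satisfies (1/3)·∇F_0(x, y, z)·(a, b, c) = -a·x² - b·y² + (a + b - c)·(z - x - y)². In particular, if a ≥ 0, b ≥ 0 and a + b ≤ c, then this polar quadric is ≤ 0 at every point of ℝ³. -/
noncomputable section

/-!
In the coordinates `x`, `y`, `u = z - x - y` the form `F k` is
`-x ^ 3 - y ^ 3 - u ^ 3 + 3 * k * x * y * u`, and the point `(a, b, c)` has coordinates
`a`, `b`, `c - a - b`. At `k = 0` the polar quadric is therefore diagonal, with coefficients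
`-a`, `-b`, `-(c - a - b)`.
-/

/-- The polar quadric of a cubic form `f` with respect to the point `A`, evaluated at `(x, y, z)`;
the paper writes `A · D ^ 2` for its value at `D`. The factor `1 / 3` makes its value at `(x, y, z)`
equal to `f x y z` when `A = (x, y, z)`. -/
def polarQuadric (f : ℝ → ℝ → ℝ → ℝ) (A : ℝ × ℝ × ℝ) (x y z : ℝ) : ℝ :=
  (1 / 3) * dot (grad f x y z) A

section PartialDerivatives

variable (k x y z : ℝ)

lemma F_swap : F k y x z = F k x y z := by
  simp only [F]
  ring

lemma pdx_F : pdx (F k) x y z =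
    3 * (-x ^ 2 + (z - x - y) ^ 2 + k * y * ((z - x - y) - x)) := by
  have hu : HasDerivAt (fun t => z - t - y) (-1) x :=
    ((hasDerivAt_id' x).const_sub z).sub_const y
  have hcubes := ((hasDerivAt_pow 3 x).fun_neg.sub_const (y ^ 3)).fun_sub (hu.fun_pow 3)
  have hprod := (((hasDerivAt_id' x).const_mul (3 * k)).mul_const y).fun_mul hu
  have hF : HasDerivAt (fun t => F k t y z) _ x := hcubes.fun_add hprod
  rw [pdx, hF.deriv]
  push_cast
  ring

lemma pdy_F : pdy (F k) x y z =
    3 * (-y ^ 2 + (z - x - y) ^ 2 + k * x * ((z - x - y) - y)) := by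
  calc pdy (F k) x y z = pdx (F k) y x z := by simp only [pdx, pdy, F_swap]
    _ = 3 * (-y ^ 2 + (z - y - x) ^ 2 + k * x * ((z - y - x) - y)) := pdx_F k y x z
    _ = 3 * (-y ^ 2 + (z - x - y) ^ 2 + k * x * ((z - x - y) - y)) := by rw [sub_right_comm z y x]

lemma pdz_F : pdz (F k) x y z = 3 * (-(z - x - y) ^ 2 + k * x * y) := by
  have hu : HasDerivAt (fun t => t - x - y) 1 z :=
    ((hasDerivAt_id' z).sub_const x).sub_const y
  have hF : HasDerivAt (F k x y) _ z :=
    ((hu.fun_pow 3).const_sub (-x ^ 3 - y ^ 3)).fun_add (hu.const_mul (3 * k * x * y))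
  rw [pdz, hF.deriv]
  push_cast
  ring

end PartialDerivatives

lemma polarQuadric_F (k a b c x y z : ℝ) :
    polarQuadric (F k) (a, b, c) x y z =
      -a * x ^ 2 - b * y ^ 2 - (c - a - b) * (z - x - y) ^ 2 +
        k * (a * y * (z - x - y) + b * x * (z - x - y) + (c - a - b) * x * y) := by
  simp only [polarQuadric, dot, grad, pdx_F, pdy_F, pdz_F]
  ring

lemma polarQuadric_F_zero (a b c x y z : ℝ) :
    polarQuadric (F 0) (a, b, c) x y z =
      -a * x ^ 2 - b * y ^ 2 + (a + b - c) * (z - x - y) ^ 2 := by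
  rw [polarQuadric_F]
  ring

lemma polarQuadric_F_zero_nonpos {a b c : ℝ} (ha : 0 ≤ a) (hb : 0 ≤ b) (hc : a + b ≤ c)
    (x y z : ℝ) : polarQuadric (F 0) (a, b, c) x y z ≤ 0 := by
  have hx : 0 ≤ a * x ^ 2 := by positivity
  have hy : 0 ≤ b * y ^ 2 := by positivity
  have hu : (a + b - c) * (z - x - y) ^ 2 ≤ 0 :=
    mul_nonpos_of_nonpos_of_nonneg (sub_nonpos.mpr hc) (sq_nonneg _)
  rw [polarQuadric_F_zero]
  linarith

theorem stmt_17 (a b c : ℝ) :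
    (∀ x y z : ℝ, (1/3) * dot (grad (F 0) x y z) (a, b, c)
      = -a*x^2 - b*y^2 + (a + b - c)*(z - x - y)^2) ∧
    (0 ≤ a → 0 ≤ b → a + b ≤ c →
      ∀ x y z : ℝ, (1/3) * dot (grad (F 0) x y z) (a, b, c) ≤ 0) :=
  ⟨polarQuadric_F_zero a b c, polarQuadric_F_zero_nonpos⟩
end
end
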